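/- Let H and G be additive Krull-Schmidt categories and (S,T) an adjoint pair with T∘S = ⊕_{i∈I} E_i for self-equivalences E_i of H, with E_{i₀} = id_H, and suppose each E_i lifts to a self-equivalence Ê_i of G satisfying S∘E_i ≅ Ê_i∘S and T∘Ê_i ≅ E_i∘T, and Ê_i(V) ≅ V for every object V in the image of S. Then for any indecomposable object W of H such that E_j W ≅ W only when j = i₀, the object S(W) is indecomposable in G. -/

import Mathlib

open CategoryTheory CategoryTheory.Limits

universe v u v' u'

/-- A (pre)additive category with finite biproducts is Krull-Schmidt if every object is a
finite biproduct of objects with local endomorphism rings. -/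
def IsKrullSchmidt (C : Type u) [Category.{v} C] [Preadditive C] [HasFiniteBiproducts C] :
    Prop :=
  ∀ X : C, ∃ (n : ℕ) (f : Fin n → C),
    (∀ i, IsLocalRing (End (f i))) ∧ Nonempty (X ≅ ⨁ f)

variable {H : Type u} {G : Type u'} [Category.{v} H] [Category.{v'} G]
variable [Preadditive H] [HasFiniteBiproducts H] [Preadditive G] [HasFiniteBiproducts G]

instance : HasFiniteProducts (H ⥤ H) := ⟨fun _ => inferInstance⟩

attribute [local instance] HasFiniteBiproducts.of_hasFiniteProducts
attribute [local instance] hasBinaryBiproducts_of_finite_biproducts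

theorem aux_isIso_of_isLocal_sum {X : H} (hX : IsLocalRing (End X)) {ι : Type*} (s : Finset ι)
    (f : ι → (X ⟶ X)) (h : IsIso (∑ i ∈ s, f i)) : ∃ i ∈ s, IsIso (f i) := by
  let g : ι → End X := f
  have h2 : IsUnit (∑ i ∈ s, g i) := (isUnit_iff_isIso _).2 h
  obtain ⟨i, hi, hu⟩ := IsLocalRing.exists_of_isUnit_sum h2
  exact ⟨i, hi, (isUnit_iff_isIso _).1 hu⟩

theorem aux_idem {X : H} (hX : IsLocalRing (End X)) (e : X ⟶ X) (he : e ≫ e = e) :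
    e = 0 ∨ e = 𝟙 X := by
  let a : End X := e
  let b : End X := 𝟙 X - e
  have h1 : IsUnit (a + b) := by
    have : a + b = 1 := by
      change e + (𝟙 X - e) = 𝟙 X
      abel
    rw [this]; exact isUnit_one
  rcases IsLocalRing.isUnit_or_isUnit_of_isUnit_add h1 with h | h
  · right
    have : IsIso e := (isUnit_iff_isIso _).1 h
    rw [← cancel_mono e, he, Category.id_comp]
  · left
    have : IsIso (𝟙 X - e) := (isUnit_iff_isIso _).1 h
    rw [← cancel_mono (𝟙 X - e)]
    simp [he]

theorem aux_not_isZero_of_local {X : H} (hX : IsLocalRing (End X)) : ¬ IsZero X := by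
  intro hz
  have := hX.toNontrivial
  exact zero_ne_one (α := End X) (hz.eq_of_src _ _)

theorem aux_local_of_iso {X Y : H} (hX : IsLocalRing (End X)) (e : X ≅ Y) :
    IsLocalRing (End Y) := by
  have hY : ¬ IsZero Y := fun h => aux_not_isZero_of_local hX (h.of_iso e)
  have : Nontrivial (End Y) :=
    ⟨⟨0, 1, fun h => hY ((IsZero.iff_id_eq_zero Y).2 h.symm)⟩⟩
  refine IsLocalRing.of_isUnit_or_isUnit_of_isUnit_add fun a b hab => ?_
  have hab' : IsIso ((a : Y ⟶ Y) + (b : Y ⟶ Y)) := (isUnit_iff_isIso _).1 hab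
  have key : ∀ c : Y ⟶ Y, IsIso (e.hom ≫ c ≫ e.inv) → IsIso c := by
    intro c hc
    have : c = e.inv ≫ (e.hom ≫ c ≫ e.inv) ≫ e.hom := by simp
    rw [this]; infer_instance
  have h1 : IsIso ((e.hom ≫ a ≫ e.inv) + (e.hom ≫ b ≫ e.inv)) := by
    rw [← Preadditive.comp_add, ← Preadditive.add_comp]
    infer_instance
  let a' : End X := e.hom ≫ a ≫ e.inv
  let b' : End X := e.hom ≫ b ≫ e.inv
  have h2 : IsUnit (a' + b') :=
    (isUnit_iff_isIso _).2 h1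
  rcases IsLocalRing.isUnit_or_isUnit_of_isUnit_add h2 with h | h
  · exact Or.inl ((isUnit_iff_isIso _).2 (key a ((isUnit_iff_isIso _).1 h)))
  · exact Or.inr ((isUnit_iff_isIso _).2 (key b ((isUnit_iff_isIso _).1 h)))

theorem aux_isZero_biproduct_zero (f : Fin 0 → H) : IsZero (⨁ f) := by
  rw [IsZero.iff_id_eq_zero]
  ext j
  exact j.elim0

theorem aux_local_of_indec (hH : IsKrullSchmidt H) {W : H} (hW : Indecomposable W) :
    IsLocalRing (End W) := by
  obtain ⟨n, f, hf, ⟨e⟩⟩ := hH W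
  cases n with
  | zero => exact (hW.1 ((aux_isZero_biproduct_zero f).of_iso e)).elim
  | succ n =>
    let φ : ⨁ f ≅ f 0 ⊞ ⨁ (fun j : Fin n => f j.succ) :=
      { hom := biprod.lift (biproduct.π f 0) (biproduct.lift fun j => biproduct.π f j.succ)
        inv := biprod.desc (biproduct.ι f 0) (biproduct.desc fun j => biproduct.ι f j.succ)
        hom_inv_id := by
          rw [biprod.lift_desc, biproduct.lift_desc, ← biproduct.total, Fin.sum_univ_succ]
        inv_hom_id := by
          ext j k
          · simp
          · simp [biproduct.ι_π_ne, (Fin.succ_ne_zero _).symm]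
          · simp [biproduct.ι_π_ne, (Fin.succ_ne_zero _)]
          · simp [biproduct.ι_π]  }
    rcases hW.2 _ _ (e ≪≫ φ) with h | h
    · exact (aux_not_isZero_of_local (hf 0) h).elim
    · refine aux_local_of_iso (hf 0) (?_ ≪≫ (e ≪≫ φ).symm)
      exact
        { hom := biprod.inl
          inv := biprod.fst
          hom_inv_id := by simp
          inv_hom_id := by
            apply biprod.hom_ext'
            · simp
            · exact h.eq_of_src _ _ }

/-- A nonzero retract of the image of a local object under an equivalence is everything. -/
theorem aux_retract {W : H} (hW : IsLocalRing (End W)) (F : H ⥤ H) [F.IsEquivalence]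
    {U : H} (hU : ¬ IsZero U) (a : U ⟶ F.obj W) (b : F.obj W ⟶ U) (hab : a ≫ b = 𝟙 U) :
    b ≫ a = 𝟙 _ := by
  obtain ⟨e, he⟩ := F.map_surjective (b ≫ a)
  have hee : e ≫ e = e := by
    apply F.map_injective
    rw [F.map_comp, he, Category.assoc, reassoc_of% hab]
  rcases aux_idem hW e hee with h | h
  · exfalso
    apply hU
    rw [h, F.map_zero] at he
    rw [IsZero.iff_id_eq_zero]
    calc 𝟙 U = (a ≫ b) ≫ (a ≫ b) := by rw [hab, Category.comp_id]
      _ = a ≫ (b ≫ a) ≫ b := by simp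
      _ = 0 := by rw [← he]; simp
  · rw [← he, h, F.map_id]

/-- If `W` is not a retract of `T B`, then a retract `B` of `S W` is zero. -/
theorem aux_zero (hH : IsKrullSchmidt H)
    (S : H ⥤ G) (T : G ⥤ H) [S.Additive] [T.Additive] (adj : S ⊣ T)
    {I : Type} [Fintype I] (E : I → H ⥤ H) (hEq : ∀ i, (E i).IsEquivalence)
    (iso : S ⋙ T ≅ ⨁ E) {W : H} (hW : IsLocalRing (End W)) {B : G}
    (i : B ⟶ S.obj W) (p : S.obj W ⟶ B) (hip : i ≫ p = 𝟙 B)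
    (hno : ∀ (s : W ⟶ T.obj B) (r : T.obj B ⟶ W), s ≫ r ≠ 𝟙 W) : IsZero B := by
  have hTB : IsZero (T.obj B) := by
    obtain ⟨n, f, hf, ⟨e⟩⟩ := hH (T.obj B)
    cases n with
    | zero => exact (aux_isZero_biproduct_zero f).of_iso e
    | succ n =>
      exfalso
      let q : W ⟶ T.obj B := adj.homEquiv _ _ p
      have hp : p = S.map q ≫ adj.counit.app B := by
        simp [q, Adjunction.homEquiv_unit]
      have hTS : T.map (S.map q) = ∑ j, iso.hom.app W ≫ (biproduct.π E j).app W ≫ (E j).map q ≫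
          (biproduct.ι E j).app (T.obj B) ≫ iso.inv.app (T.obj B) := by
        have h1 : T.map (S.map q) = iso.hom.app W ≫ (⨁ E).map q ≫ iso.inv.app (T.obj B) := by
          have := iso.hom.naturality q
          rw [← Category.assoc, ← this]; simp
        have h2 : 𝟙 ((⨁ E).obj W) = ∑ j, (biproduct.π E j).app W ≫ (biproduct.ι E j).app W := by
          rw [← NatTrans.id_app, ← biproduct.total, NatTrans.app_sum]; rfl
        rw [h1, ← Category.id_comp ((⨁ E).map q), h2]
        simp [Preadditive.sum_comp, Preadditive.comp_sum]
      have hid : 𝟙 (f 0) = ∑ j, (biproduct.ι f 0 ≫ e.inv ≫ T.map i ≫ iso.hom.app W ≫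
          (biproduct.π E j).app W) ≫ (E j).map q ≫
          ((biproduct.ι E j).app (T.obj B) ≫ iso.inv.app (T.obj B) ≫ T.map (adj.counit.app B) ≫
          e.hom ≫ biproduct.π f 0) := by
        have h3 : 𝟙 (f 0) = biproduct.ι f 0 ≫ e.inv ≫ (T.map i ≫ T.map (S.map q) ≫
            T.map (adj.counit.app B)) ≫ e.hom ≫ biproduct.π f 0 := by
          rw [← T.map_comp, ← hp, ← T.map_comp, hip]; simp
        rw [h3, hTS]
        simp [Preadditive.sum_comp, Preadditive.comp_sum]
      obtain ⟨j, -, hj⟩ := aux_isIso_of_isLocal_sum (hf 0) Finset.univ _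
        (hid ▸ (inferInstance : IsIso (𝟙 (f 0))))
      generalize (biproduct.ι f 0 ≫ e.inv ≫ T.map i ≫ iso.hom.app W ≫
          (biproduct.π E j).app W) = a at hj
      generalize ((biproduct.ι E j).app (T.obj B) ≫ iso.inv.app (T.obj B) ≫
        T.map (adj.counit.app B) ≫ e.hom ≫ biproduct.π f 0) = x at hj
      have := hEq j
      have h4 := aux_retract hW (E j) (aux_not_isZero_of_local (hf 0)) a
        (((E j).map q ≫ x) ≫ inv (a ≫ (E j).map q ≫ x))
        (by rw [← Category.assoc]; exact IsIso.hom_inv_id _)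
      obtain ⟨r, hr⟩ := (E j).map_surjective (x ≫ inv (a ≫ (E j).map q ≫ x) ≫ a)
      refine hno q r ((E j).map_injective ?_)
      rw [Functor.map_comp, hr, CategoryTheory.Functor.map_id, ← h4]
      simp only [Category.assoc]
  have hp0 : p = 0 := by
    apply (adj.homEquiv _ _).injective
    exact hTB.eq_of_tgt _ _
  rw [IsZero.iff_id_eq_zero, ← hip, hp0, comp_zero]

/-- `W` has multiplicity one in `T S W`. -/
theorem aux_mult {I : Type} [Fintype I] (E : I → H ⥤ H) (hEq : ∀ i, (E i).IsEquivalence)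
    (i₀ : I) {W : H} (hW : IsLocalRing (End W)) (e₀ : (E i₀).obj W ≅ W)
    (hfix : ∀ j, Nonempty ((E j).obj W ≅ W) → j = i₀)
    {sA sB : W ⟶ (⨁ E).obj W} {rA rB : (⨁ E).obj W ⟶ W}
    (hA : sA ≫ rA = 𝟙 W) (hB : sB ≫ rB = 𝟙 W) (hBA : sB ≫ rA = 0) : False := by
  have h2 : 𝟙 ((⨁ E).obj W) = ∑ j, (biproduct.π E j).app W ≫ (biproduct.ι E j).app W := by
    rw [← NatTrans.id_app, ← biproduct.total, NatTrans.app_sum]; rfl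
  have hne : ∀ j, j ≠ i₀ → ∀ (a : W ⟶ (E j).obj W) (b : (E j).obj W ⟶ W), ¬ IsIso (a ≫ b) := by
    intro j hj a b hab
    have := hEq j
    have hab' : a ≫ (b ≫ inv (a ≫ b)) = 𝟙 W := by
      rw [← Category.assoc]; exact IsIso.hom_inv_id _
    exact hj (hfix j ⟨⟨b ≫ inv (a ≫ b), a,
      aux_retract hW (E j) (aux_not_isZero_of_local hW) a _ hab', hab'⟩⟩)
  have hexp : ∀ (s : W ⟶ (⨁ E).obj W) (r : (⨁ E).obj W ⟶ W), s ≫ r =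
      ∑ j, (s ≫ (biproduct.π E j).app W) ≫ ((biproduct.ι E j).app W ≫ r) := by
    intro s r
    calc s ≫ r = s ≫ 𝟙 _ ≫ r := by simp
      _ = _ := by
        rw [h2]
        simp only [Preadditive.sum_comp, Preadditive.comp_sum, Category.assoc]
  -- components at `i₀`
  have hiso : ∀ (s : W ⟶ (⨁ E).obj W) (r : (⨁ E).obj W ⟶ W), IsIso (s ≫ r) →
      IsIso (s ≫ (biproduct.π E i₀).app W) ∧ IsIso ((biproduct.ι E i₀).app W ≫ r) := by
    intro s r h
    rw [hexp] at h
    obtain ⟨j, -, hj⟩ := aux_isIso_of_isLocal_sum hW _ _ h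
    have hji : j = i₀ := by
      by_contra hc
      exact hne j hc _ _ hj
    subst hji
    generalize s ≫ (biproduct.π E j).app W = a at hj
    generalize (biproduct.ι E j).app W ≫ r = b at hj
    have := hEq j
    have hab' : a ≫ (b ≫ inv (a ≫ b)) = 𝟙 W := by
      rw [← Category.assoc]; exact IsIso.hom_inv_id _
    have ha : IsIso a := ⟨_, hab',
      aux_retract hW (E j) (aux_not_isZero_of_local hW) a _ hab'⟩
    exact ⟨ha, IsIso.of_isIso_comp_left a b⟩
  have h1 := (hiso sA rA (hA ▸ inferInstance)).2
  have h3 := (hiso sB rB (hB ▸ inferInstance)).1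
  have h4 := hexp sB rA
  rw [hBA] at h4
  classical
  rw [← Finset.add_sum_erase _ _ (Finset.mem_univ i₀)] at h4
  have h5 : IsIso (∑ j ∈ Finset.univ.erase i₀,
      (sB ≫ (biproduct.π E j).app W) ≫ ((biproduct.ι E j).app W ≫ rA)) := by
    rw [eq_neg_of_add_eq_zero_right h4.symm]
    generalize sB ≫ (biproduct.π E i₀).app W = a at h3
    generalize (biproduct.ι E i₀).app W ≫ rA = b at h1
    exact ⟨-(inv b ≫ inv a), by simp, by simp⟩
  obtain ⟨j, hj, hji⟩ := aux_isIso_of_isLocal_sum hW _ _ h5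
  exact hne j (Finset.ne_of_mem_erase hj) _ _ hji

/-- Let `H` and `G` be additive Krull-Schmidt categories and `(S,T)` an
adjoint pair with `T∘S ≅ ⊕_{i∈I} E_i` for self-equivalences `E_i` of `H`, with
`E_{i₀} = id_H`, and suppose each `E_i` lifts to a self-equivalence `Ê_i` of `G`
satisfying `S∘E_i ≅ Ê_i∘S` and `T∘Ê_i ≅ E_i∘T`, and `Ê_i(V) ≅ V` for every object `V`
in the image of `S`.  Then for any indecomposable object `W` of `H` such that
`E_j W ≅ W` only when `j = i₀`, the object `S(W)` is indecomposable in `G`. -/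
theorem clifford_trivial_inertia
    (hH : IsKrullSchmidt H) (hG : IsKrullSchmidt G)
    (S : H ⥤ G) (T : G ⥤ H) [S.Additive] [T.Additive] (adj : S ⊣ T)
    {I : Type} [Fintype I] (E : I → H ⥤ H) (i₀ : I)
    (hE0 : E i₀ = 𝟭 H) (hEq : ∀ i, (E i).IsEquivalence)
    (iso : S ⋙ T ≅ ⨁ E)
    (Ehat : I → G ⥤ G) (hEhatEq : ∀ i, (Ehat i).IsEquivalence)
    (hS : ∀ i, Nonempty (E i ⋙ S ≅ S ⋙ Ehat i))
    (hT : ∀ i, Nonempty (Ehat i ⋙ T ≅ T ⋙ E i))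
    (hfixim : ∀ (i : I) (X : H), Nonempty ((Ehat i).obj (S.obj X) ≅ S.obj X))
    (W : H) (hW : Indecomposable W)
    (hWfix : ∀ j : I, Nonempty ((E j).obj W ≅ W) ↔ j = i₀) :
    Indecomposable (S.obj W) := by
  have hloc := aux_local_of_indec hH hW
  have e₀ : (E i₀).obj W ≅ W := ((hWfix i₀).2 rfl).some
  have hfix : ∀ j, Nonempty ((E j).obj W ≅ W) → j = i₀ := fun j => (hWfix j).1
  refine ⟨fun hz => ?_, fun A B φ => ?_⟩
  · have hz1 : IsZero ((⨁ E).obj W) := (T.map_isZero hz).of_iso (iso.symm.app W)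
    have hz2 : IsZero ((E i₀).obj W) := by
      rw [IsZero.iff_id_eq_zero]
      have h : (biproduct.ι E i₀).app W ≫ (biproduct.π E i₀).app W = 𝟙 _ := by
        rw [← NatTrans.comp_app, biproduct.ι_π_self]; rfl
      rw [← h, hz1.eq_of_tgt ((biproduct.ι E i₀).app W) 0, zero_comp]
    exact hW.1 (hz2.of_iso e₀.symm)
  · by_cases hA : ∃ (s : W ⟶ T.obj A) (r : T.obj A ⟶ W), s ≫ r = 𝟙 W
    · right
      apply aux_zero hH S T adj E hEq iso hloc (biprod.inr ≫ φ.inv) (φ.hom ≫ biprod.snd) (by simp)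
      intro s' r' hB
      obtain ⟨s, r, hA⟩ := hA
      refine aux_mult E hEq i₀ hloc e₀ hfix
        (sA := s ≫ T.map (biprod.inl ≫ φ.inv) ≫ iso.hom.app W)
        (sB := s' ≫ T.map (biprod.inr ≫ φ.inv) ≫ iso.hom.app W)
        (rA := iso.inv.app W ≫ T.map (φ.hom ≫ biprod.fst) ≫ r)
        (rB := iso.inv.app W ≫ T.map (φ.hom ≫ biprod.snd) ≫ r') ?_ ?_ ?_
      · simp only [Category.assoc, Iso.hom_inv_id_app_assoc, ← T.map_comp_assoc]
        simp [hA]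
      · simp only [Category.assoc, Iso.hom_inv_id_app_assoc, ← T.map_comp_assoc]
        simp [hB]
      · simp only [Category.assoc, Iso.hom_inv_id_app_assoc, ← T.map_comp_assoc]
        simp
    · left
      push Not at hA
      exact aux_zero hH S T adj E hEq iso hloc (biprod.inl ≫ φ.inv) (φ.hom ≫ biprod.fst) (by simp) hA
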